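/- arXiv:1310.5371 — 2 statements merged into one kernel-verified Lean document; each statement's English description precedes it below -/
import Mathlib

section
/- There exists a constant c > 0, depending only on d, K₀, κ, α and ℓ, such that ψ(ξ) ≥ c L(|ξ|⁻¹) for all ξ ∈ ℝ^d with |ξ| ≥ 5. -/
open MeasureTheory Metric Set Filter
open scoped ENNReal Topology RealInnerProductSpace

noncomputable section

/-- `L(r) = ∫_r^1 ℓ(s)/s ds`. -/
def Lfun (ℓ : ℝ → ℝ) (r : ℝ) : ℝ := ∫ s in r..1, ℓ s / s

/-- `ℓ` varies regularly at `0+` with index `ρ`. -/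
def RegVaryAt0 (ℓ : ℝ → ℝ) (ρ : ℝ) : Prop :=
  ∀ lam : ℝ, 0 < lam →
    Filter.Tendsto (fun r => ℓ (lam * r) / ℓ r) (𝓝[>] (0 : ℝ)) (𝓝 (lam ^ ρ))

/-- `ℓ` is bounded away from `0` and `∞` on compact subsets of `(0,1)`. -/
def LocBddAway (ℓ : ℝ → ℝ) : Prop :=
  ∀ a b : ℝ, 0 < a → a ≤ b → b < 1 →
    ∃ m M : ℝ, 0 < m ∧ ∀ s : ℝ, a ≤ s → s ≤ b → m ≤ ℓ s ∧ ℓ s ≤ M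

/-- conditions on the (translation invariant) kernel `k`: measurability, nonnegativity,
symmetry, `∫ (1 ∧ |h|²) k(h) dh ≤ K₀` and `κ⁻¹ ℓ(|h|)|h|^{-d} ≤ k(h) ≤ κ ℓ(|h|)|h|^{-d}`
for `0 < |h| ≤ 1`. -/
def KernelCondsTI (d : ℕ) (K₀ κ : ℝ) (ℓ : ℝ → ℝ)
    (k : EuclideanSpace ℝ (Fin d) → ℝ) : Prop :=
  Measurable k ∧ (∀ h, 0 ≤ k h) ∧ (∀ h, k h = k (-h)) ∧
  ((∫⁻ h in ({0}ᶜ : Set (EuclideanSpace ℝ (Fin d))),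
      ENNReal.ofReal (min 1 (‖h‖ ^ 2) * k h)) ≤ ENNReal.ofReal K₀) ∧
  (∀ h : EuclideanSpace ℝ (Fin d), 0 < ‖h‖ → ‖h‖ ≤ 1 →
    κ⁻¹ * (ℓ ‖h‖ / ‖h‖ ^ d) ≤ k h ∧ k h ≤ κ * (ℓ ‖h‖ / ‖h‖ ^ d))

/-- the characteristic exponent `ψ(ξ) = ∫ (1 - cos⟨ξ,h⟩) k(h) dh`. -/
def psiFun (d : ℕ) (k : EuclideanSpace ℝ (Fin d) → ℝ)
    (ξ : EuclideanSpace ℝ (Fin d)) : ℝ :=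
  ∫ h in ({0}ᶜ : Set (EuclideanSpace ℝ (Fin d))), (1 - Real.cos ⟪ξ, h⟫) * k h

lemma aux_sin_small (x : ℝ) (hx : 1/6 ≤ x) (h1 : x ≤ 1) : |Real.sin x| ≤ (1 - 1/400) * x := by
  have hb := Real.sin_bound (x := x) (by rw [abs_of_nonneg (by linarith)]; exact h1)
  rw [abs_of_nonneg (by linarith : (0:ℝ) ≤ x)] at hb
  have h0 : 0 ≤ Real.sin x := Real.sin_nonneg_of_nonneg_of_le_pi (by linarith) (by linarith [Real.pi_gt_three])
  rw [abs_of_nonneg h0]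
  have := (abs_le.1 hb).2
  have h4 : x^5 ≤ x^3 := pow_le_pow_of_le_one (by linarith) h1 (by norm_num)
  have h3 : x * (1/36) ≤ x^3 := by
    have : x^3 = x * x^2 := by ring
    rw [this]
    apply mul_le_mul_of_nonneg_left _ (by linarith)
    nlinarith
  linarith

lemma aux_sin (x : ℝ) (hx : 1/6 ≤ x) : |Real.sin x| ≤ (1 - 1/400) * x := by
  rcases le_total x 1 with h1 | h1
  · exact aux_sin_small x hx h1
  rcases le_total x 2 with h2 | h2
  · have h := aux_sin_small (x/2) (by linarith) (by linarith)
    have e : Real.sin x = 2 * Real.sin (x/2) * Real.cos (x/2) := by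
      rw [← Real.sin_two_mul]; congr 1; ring
    rw [e, abs_mul, abs_mul]
    have hc := Real.abs_cos_le_one (x/2)
    have hs := abs_nonneg (Real.sin (x/2))
    rw [abs_of_pos (by norm_num : (0:ℝ) < 2)]
    nlinarith
  · have := Real.abs_sin_le_one x
    linarith

lemma aux_int_cos (t : ℝ) (ht : 1/3 ≤ |t|) :
    1/400 ≤ ∫ v in (1:ℝ)..2, (1 - Real.cos (v * t)) := by
  wlog hpos : 0 ≤ t generalizing t
  · have := this (-t) (by simpa using ht) (by linarith)
    simpa using this
  rw [abs_of_nonneg hpos] at ht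
  have h0 : 0 < t := by linarith
  rw [intervalIntegral.integral_sub (by simp) (Continuous.intervalIntegrable (by fun_prop) _ _),
    intervalIntegral.integral_comp_mul_right _ h0.ne']
  simp only [intervalIntegral.integral_const, integral_cos, smul_eq_mul]
  have e : Real.sin (2*t) - Real.sin (1 * t) = 2 * Real.sin (t/2) * Real.cos (3*t/2) := by
    rw [Real.sin_sub_sin]; congr 2 <;> ring_nf
  rw [e]
  have h := aux_sin (t/2) (by linarith)
  have hc := Real.abs_cos_le_one (3*t/2)
  have : 2 * Real.sin (t/2) * Real.cos (3*t/2) ≤ (1-1/400) * t := by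
    refine (le_abs_self _).trans ?_
    rw [abs_mul, abs_mul, abs_of_pos (by norm_num : (0:ℝ) < 2)]
    have hs := abs_nonneg (Real.sin (t/2))
    nlinarith
  have h5 : t⁻¹ * (2 * Real.sin (t/2) * Real.cos (3*t/2)) ≤ 1 - 1/400 := by
    rw [inv_mul_le_iff₀ h0]; linarith
  linarith

lemma aux_dct (α : ℝ) (hα₀ : 0 ≤ α) (ℓ : ℝ → ℝ) (hℓmeas : Measurable ℓ)
    (hℓpos : ∀ s : ℝ, 0 < s → s < 1 → 0 < ℓ s) (hℓreg : RegVaryAt0 ℓ (-α)) :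
    ∃ c δ : ℝ, 0 < c ∧ 0 < δ ∧ δ ≤ 1/2 ∧ ∀ r, 0 < r → r < δ → ∀ t : ℝ, 1/3 ≤ |t| →
      ENNReal.ofReal (c * ℓ r) ≤
        ∫⁻ v in Ioo (1:ℝ) 2, ENNReal.ofReal ((1 - Real.cos (v * t)) * ℓ (v * r)) := by
  set b : ℝ := 2 ^ (-α) with hb
  have hbpos : 0 < b := by positivity
  set φ : ℝ → ℝ → ℝ := fun r v => min (ℓ (v * r) / ℓ r) b with hφ
  have hφm : ∀ r, Measurable (φ r) := fun r => by
    simp only [hφ]; fun_prop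
  have hφ0 : ∀ r, 0 < r → r < 1/2 → ∀ v ∈ Ioo (1:ℝ) 2, 0 ≤ φ r v := by
    intro r h0 h1 v hv
    have a := hℓpos r h0 (by linarith)
    have a' := hℓpos (v*r) (by have := hv.1; positivity) (by nlinarith [hv.2])
    simp only [hφ]
    exact le_min (by positivity) hbpos.le
  have hφb : ∀ r v, φ r v ≤ b := fun r v => min_le_right _ _
  have hlim : Tendsto (fun r => ∫ v in Ioo (1:ℝ) 2, φ r v) (𝓝[>] 0)
      (𝓝 (∫ v in Ioo (1:ℝ) 2, b)) := by
    apply tendsto_integral_filter_of_dominated_convergence (fun _ => b)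
    · exact Eventually.of_forall fun r => (hφm r).aestronglyMeasurable
    · have : ∀ᶠ r in 𝓝[>] (0:ℝ), r ∈ Ioo (0:ℝ) (1/2) := Ioo_mem_nhdsGT (by norm_num)
      filter_upwards [this] with r hr
      filter_upwards [ae_restrict_mem measurableSet_Ioo] with v hv
      rw [Real.norm_of_nonneg (hφ0 r hr.1 hr.2 v hv)]
      exact hφb r v
    · exact integrable_const _
    · filter_upwards [ae_restrict_mem measurableSet_Ioo] with v hv
      have h := (hℓreg v (by linarith [hv.1])).min (tendsto_const_nhds (x := b))
      have e : min (v ^ (-α)) b = b := by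
        apply min_eq_right
        exact Real.rpow_le_rpow_of_nonpos (by linarith [hv.1]) hv.2.le (by linarith)
      rw [e] at h
      exact h
  have hint : ∫ v in Ioo (1:ℝ) 2, b = b := by simp; norm_num
  rw [hint] at hlim
  have hev : ∀ᶠ r in 𝓝[>] (0:ℝ), b - b/1600 < ∫ v in Ioo (1:ℝ) 2, φ r v :=
    hlim.eventually (lt_mem_nhds (by linarith))
  obtain ⟨δ, hδ, hδ'⟩ := (mem_nhdsGT_iff_exists_Ioo_subset.1 hev)
  refine ⟨b/800, min δ (1/2), by positivity, lt_min hδ (by norm_num), min_le_right _ _, ?_⟩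
  intro r h0 hr t ht
  have hr1 : r < 1/2 := lt_of_lt_of_le hr (min_le_right _ _)
  have hI : b - b/1600 < ∫ v in Ioo (1:ℝ) 2, φ r v := hδ' ⟨h0, lt_of_lt_of_le hr (min_le_left _ _)⟩
  have hlr := hℓpos r h0 (by linarith)
  have hφint : IntegrableOn (φ r) (Ioo (1:ℝ) 2) := by
    apply Measure.integrableOn_of_bounded (M := b) (by simp) (hφm r).aestronglyMeasurable
    filter_upwards [ae_restrict_mem measurableSet_Ioo] with v hv
    rw [Real.norm_of_nonneg (hφ0 r h0 hr1 v hv)]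
    exact hφb r v
  have hcint : IntegrableOn (fun v => (1 - Real.cos (v*t))) (Ioo (1:ℝ) 2) :=
    (Continuous.integrableOn_Icc (by fun_prop)).mono_set Ioo_subset_Icc_self
  have hprod : IntegrableOn (fun v => (1 - Real.cos (v*t)) * φ r v) (Ioo (1:ℝ) 2) := by
    apply Measure.integrableOn_of_bounded (M := 2 * b) (by simp)
      (Measurable.aestronglyMeasurable (by have := hφm r; fun_prop))
    filter_upwards [ae_restrict_mem measurableSet_Ioo] with v hv
    have h1 := hφ0 r h0 hr1 v hv
    have h2 := Real.cos_le_one (v*t)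
    have h3 := Real.neg_one_le_cos (v*t)
    rw [Real.norm_of_nonneg (mul_nonneg (by linarith) h1)]
    exact mul_le_mul (by linarith) (hφb r v) h1 (by norm_num)
  have hkey : b/800 ≤ ∫ v in Ioo (1:ℝ) 2, (1 - Real.cos (v*t)) * φ r v := by
    have h1 : ∫ v in Ioo (1:ℝ) 2, (b * (1 - Real.cos (v*t)) - 2 * (b - φ r v)) ≤
        ∫ v in Ioo (1:ℝ) 2, (1 - Real.cos (v*t)) * φ r v := by
      apply integral_mono_ae _ hprod
      · apply Eventually.of_forall
        intro v
        have h2 := Real.cos_le_one (v*t)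
        have h3 := Real.neg_one_le_cos (v*t)
        have := hφb r v
        simp only
        nlinarith
      · exact (hcint.const_mul b).sub (((integrable_const b).sub hφint).const_mul 2)
    have hD : IntegrableOn (fun v => 2 * (b - φ r v)) (Ioo (1:ℝ) 2) :=
      ((integrable_const b).sub hφint).const_mul 2
    rw [integral_sub (hcint.const_mul b) hD,
      integral_const_mul, integral_const_mul, integral_sub (integrable_const b) hφint, hint] at h1
    have h2 := aux_int_cos t ht
    rw [intervalIntegral.integral_of_le (by norm_num), integral_Ioc_eq_integral_Ioo] at h2
    nlinarith
  calc ENNReal.ofReal (b/800 * ℓ r)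
      ≤ ENNReal.ofReal (∫ v in Ioo (1:ℝ) 2, ((1 - Real.cos (v*t)) * φ r v) * ℓ r) := by
        rw [integral_mul_const]
        exact ENNReal.ofReal_le_ofReal (mul_le_mul_of_nonneg_right hkey hlr.le)
    _ = ∫⁻ v in Ioo (1:ℝ) 2, ENNReal.ofReal (((1 - Real.cos (v*t)) * φ r v) * ℓ r) := by
        apply ofReal_integral_eq_lintegral_ofReal (hprod.mul_const _)
        filter_upwards [ae_restrict_mem measurableSet_Ioo] with v hv
        have h1 := hφ0 r h0 hr1 v hv
        have h2 := Real.cos_le_one (v*t)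
        exact mul_nonneg (mul_nonneg (by linarith) h1) hlr.le
    _ ≤ _ := by
        apply lintegral_mono
        intro v
        apply ENNReal.ofReal_le_ofReal
        rw [mul_assoc]
        have h2 := Real.cos_le_one (v*t)
        apply mul_le_mul_of_nonneg_left _ (by linarith)
        rw [← le_div_iff₀ hlr]
        exact min_le_left _ _

lemma aux_scale (G : ℝ → ℝ≥0∞) (hG : Measurable G) (v : ℝ) (hv : 0 < v) :
    ∫⁻ r, ENNReal.ofReal v * G (v * r) = ∫⁻ s, G s := by
  rw [lintegral_const_mul _ (by fun_prop)]
  have h := lintegral_map (μ := volume) hG (measurable_const_mul v)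
  rw [Real.map_volume_mul_left hv.ne', lintegral_smul_measure] at h
  rw [← h, smul_eq_mul, ← mul_assoc, ← ENNReal.ofReal_mul hv.le, abs_of_pos (by positivity),
    mul_inv_cancel₀ hv.ne']
  simp

lemma aux_micro (ℓ : ℝ → ℝ) (hℓmeas : Measurable ℓ)
    (c δ : ℝ) (hc : 0 < c) (hδ : δ ≤ 1/2)
    (H : ∀ r, 0 < r → r < δ → ∀ t : ℝ, 1/3 ≤ |t| →
      ENNReal.ofReal (c * ℓ r) ≤
        ∫⁻ v in Ioo (1:ℝ) 2, ENNReal.ofReal ((1 - Real.cos (v * t)) * ℓ (v * r)))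
    (R u : ℝ) (hR : 5 ≤ R) (hu : R / 3 ≤ |u|) :
    ENNReal.ofReal c * ∫⁻ s in Ioo R⁻¹ δ, ENNReal.ofReal (ℓ s / s) ≤
      ∫⁻ s in Ioo (0:ℝ) 1, ENNReal.ofReal ((1 - Real.cos (s * u)) * (ℓ s / s)) := by
  have hR0 : 0 < R := by linarith
  set G : ℝ → ℝ≥0∞ := (Ioo (0:ℝ) 1).indicator
    (fun s => ENNReal.ofReal ((1 - Real.cos (s * u)) * (ℓ s / s))) with hG
  have hGm : Measurable G := by
    apply Measurable.indicator _ measurableSet_Ioo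
    fun_prop
  have e1 : ∫⁻ s in Ioo (0:ℝ) 1, ENNReal.ofReal ((1 - Real.cos (s * u)) * (ℓ s / s)) =
      ∫⁻ v in Ioo (1:ℝ) 2, ∫⁻ r, ENNReal.ofReal v * G (v * r) := by
    rw [← lintegral_indicator measurableSet_Ioo, ← hG]
    rw [setLIntegral_congr_fun (g := fun _ => ∫⁻ s, G s) measurableSet_Ioo]
    · simp only [lintegral_const, Measure.restrict_apply_univ, Real.volume_Ioo]
      rw [show (2:ℝ) - 1 = 1 by norm_num]
      simp
    · intro v hv
      exact aux_scale G hGm v (by linarith [hv.1])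
  rw [e1, lintegral_lintegral_swap (by
    apply Measurable.aemeasurable
    simp only [Function.uncurry_def]
    fun_prop), ← lintegral_const_mul _ (by fun_prop)]
  refine le_trans ?_ (setLIntegral_le_lintegral (Ioo R⁻¹ δ) _)
  apply setLIntegral_mono' measurableSet_Ioo
  intro r hr
  have hr0 : 0 < r := lt_trans (by positivity) hr.1
  have ht : 1/3 ≤ |r * u| := by
    rw [abs_mul, abs_of_pos hr0]
    have : R⁻¹ * (R/3) ≤ r * |u| := mul_le_mul hr.1.le hu (by positivity) hr0.le
    have e : R⁻¹ * (R/3) = 1/3 := by field_simp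
    linarith
  have h := H r hr0 hr.2 (r*u) ht
  calc ENNReal.ofReal c * ENNReal.ofReal (ℓ r / r)
      = ENNReal.ofReal (r⁻¹) * ENNReal.ofReal (c * ℓ r) := by
        rw [← ENNReal.ofReal_mul hc.le, ← ENNReal.ofReal_mul (by positivity)]
        congr 1; field_simp
    _ ≤ ENNReal.ofReal (r⁻¹) * ∫⁻ v in Ioo (1:ℝ) 2,
          ENNReal.ofReal ((1 - Real.cos (v * (r*u))) * ℓ (v * r)) := by gcongr
    _ = ∫⁻ v in Ioo (1:ℝ) 2, ENNReal.ofReal (r⁻¹) *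
          ENNReal.ofReal ((1 - Real.cos (v * (r*u))) * ℓ (v * r)) := by
        rw [lintegral_const_mul _ (by fun_prop)]
    _ ≤ _ := by
        apply setLIntegral_mono' measurableSet_Ioo
        intro v hv
        have hv0 : 0 < v := by linarith [hv.1]
        have hmem : v * r ∈ Ioo (0:ℝ) 1 := ⟨by positivity, by nlinarith [hv.2, hr.2]⟩
        rw [hG, indicator_of_mem hmem, ← ENNReal.ofReal_mul (by positivity),
          ← ENNReal.ofReal_mul hv0.le]
        apply ENNReal.ofReal_le_ofReal
        apply le_of_eq
        rw [← mul_assoc v r u]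
        field_simp

lemma aux_macro (ℓ : ℝ → ℝ) (hℓbdd : LocBddAway ℓ) :
    ∃ c : ℝ, 0 < c ∧ ∀ u : ℝ, 5/3 ≤ |u| → ENNReal.ofReal c ≤
      ∫⁻ s in Ioo (0:ℝ) 1, ENNReal.ofReal ((1 - Real.cos (s * u)) * (ℓ s / s)) := by
  obtain ⟨m, M, hm, h⟩ := hℓbdd (1/4) (1/2) (by norm_num) (by norm_num) (by norm_num)
  refine ⟨m/1600, by positivity, fun u hu => ?_⟩
  have hcint : IntegrableOn (fun s => (1 - Real.cos (s*u)) * m) (Ioc (1/4:ℝ) (1/2)) :=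
    (Continuous.integrableOn_Icc (by fun_prop)).mono_set Ioc_subset_Icc_self
  have hnn : ∀ s, 0 ≤ 1 - Real.cos (s*u) := fun s => by linarith [Real.cos_le_one (s*u)]
  calc ENNReal.ofReal (m/1600)
      ≤ ENNReal.ofReal (∫ s in Ioc (1/4:ℝ) (1/2), (1 - Real.cos (s*u)) * m) := by
        apply ENNReal.ofReal_le_ofReal
        rw [integral_mul_const, ← intervalIntegral.integral_of_le (by norm_num)]
        have h1 := aux_int_cos (u/4) (by rw [abs_div, abs_of_pos (by norm_num : (0:ℝ) < 4)]; linarith)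
        have h2 := intervalIntegral.integral_comp_mul_right (a := 1) (b := 2)
          (fun s => 1 - Real.cos (s*u)) (c := 1/4) (by norm_num)
        have e : ∀ v : ℝ, v * (1/4) * u = v * (u/4) := fun v => by ring
        simp only [e] at h2
        rw [h2] at h1
        norm_num at h1 ⊢
        nlinarith
    _ = ∫⁻ s in Ioc (1/4:ℝ) (1/2), ENNReal.ofReal ((1 - Real.cos (s*u)) * m) :=
        ofReal_integral_eq_lintegral_ofReal hcint
          (Eventually.of_forall fun s => mul_nonneg (hnn s) hm.le)
    _ ≤ ∫⁻ s in Ioc (1/4:ℝ) (1/2), ENNReal.ofReal ((1 - Real.cos (s * u)) * (ℓ s / s)) := by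
        apply setLIntegral_mono' measurableSet_Ioc
        intro s hs
        apply ENNReal.ofReal_le_ofReal
        apply mul_le_mul_of_nonneg_left _ (hnn s)
        have h3 := (h s hs.1.le hs.2).1
        have hs0 : 0 < s := by linarith [hs.1]
        rw [le_div_iff₀ hs0]
        nlinarith [hs.2]
    _ ≤ _ := by
        apply lintegral_mono_set
        intro s hs
        exact ⟨by linarith [hs.1], by linarith [hs.2]⟩

lemma aux_1d (α : ℝ) (hα₀ : 0 ≤ α) (ℓ : ℝ → ℝ) (hℓmeas : Measurable ℓ)
    (hℓpos : ∀ s : ℝ, 0 < s → s < 1 → 0 < ℓ s)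
    (hℓbdd : LocBddAway ℓ) (hℓreg : RegVaryAt0 ℓ (-α))
    (hA : ∫⁻ s in Ioo (1/2:ℝ) 1, ENNReal.ofReal (ℓ s / s) ≠ ∞) :
    ∃ C : ℝ≥0∞, C ≠ ∞ ∧ ∀ R u : ℝ, 5 ≤ R → R / 3 ≤ |u| →
      ∫⁻ s in Ioo R⁻¹ 1, ENNReal.ofReal (ℓ s / s) ≤
      C * ∫⁻ s in Ioo (0:ℝ) 1, ENNReal.ofReal ((1 - Real.cos (s * u)) * (ℓ s / s)) := by
  obtain ⟨c, δ, hc, hδ0, hδ, H⟩ := aux_dct α hα₀ ℓ hℓmeas hℓpos hℓreg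
  obtain ⟨c', hc', H'⟩ := aux_macro ℓ hℓbdd
  set A := ∫⁻ s in Ioo (1/2:ℝ) 1, ENNReal.ofReal (ℓ s / s)
  set B := ∫⁻ s in Icc δ (1/2), ENNReal.ofReal (ℓ s / s) with hBdef
  have hB : B ≠ ∞ := by
    obtain ⟨m, M, hm, h⟩ := hℓbdd δ (1/2) hδ0 hδ (by norm_num)
    apply ne_of_lt
    calc B ≤ ∫⁻ s in Icc δ (1/2), ENNReal.ofReal (M / δ) := by
          apply setLIntegral_mono' measurableSet_Icc
          intro s hs
          have h1 := h s hs.1 hs.2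
          apply ENNReal.ofReal_le_ofReal
          apply div_le_div₀ (by linarith) h1.2 hδ0 hs.1
      _ < ∞ := by
          simp only [lintegral_const, Measure.restrict_apply_univ, Real.volume_Icc]
          exact ENNReal.mul_lt_top ENNReal.ofReal_lt_top ENNReal.ofReal_lt_top
  refine ⟨(ENNReal.ofReal c)⁻¹ + (A + B) * (ENNReal.ofReal c')⁻¹, ?_, ?_⟩
  · apply ENNReal.add_ne_top.2 ⟨by simpa using hc, ENNReal.mul_ne_top (ENNReal.add_ne_top.2 ⟨hA, hB⟩) (by simpa using hc')⟩
  intro R u hR hu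
  have h1 := aux_micro ℓ hℓmeas c δ hc hδ H R u hR hu
  have h2 := H' u (by linarith)
  set I := ∫⁻ s in Ioo (0:ℝ) 1, ENNReal.ofReal ((1 - Real.cos (s * u)) * (ℓ s / s))
  have hsub : Ioo R⁻¹ 1 ⊆ Ioo R⁻¹ δ ∪ (Ioo (1/2) 1 ∪ Icc δ (1/2)) := by
    intro s hs
    rcases lt_or_ge s δ with h | h
    · left; exact ⟨hs.1, h⟩
    · right
      rcases lt_or_ge (1/2) s with h' | h'
      · left; exact ⟨h', hs.2⟩
      · right; exact ⟨h, h'⟩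
  calc ∫⁻ s in Ioo R⁻¹ 1, ENNReal.ofReal (ℓ s / s)
      ≤ (∫⁻ s in Ioo R⁻¹ δ, ENNReal.ofReal (ℓ s / s)) + (A + B) :=
        (lintegral_mono_set hsub).trans ((lintegral_union_le _ _ _).trans
          (add_le_add le_rfl (lintegral_union_le _ _ _)))
    _ ≤ (ENNReal.ofReal c)⁻¹ * I + (A + B) * ((ENNReal.ofReal c')⁻¹ * I) := by
        gcongr
        · rw [mul_comm, ← div_eq_mul_inv, ENNReal.le_div_iff_mul_le (by simp [hc]) (by simp), mul_comm]
          exact h1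
        · apply le_mul_of_one_le_right zero_le
          rw [mul_comm, ← div_eq_mul_inv, ENNReal.le_div_iff_mul_le (by simp [hc']) (by simp), one_mul]
          exact h2
    _ = _ := by ring

lemma aux_polar (d : ℕ) (F : EuclideanSpace ℝ (Fin d) → ℝ≥0∞) (hF : Measurable F) :
    ∫⁻ h in ({0}ᶜ : Set (EuclideanSpace ℝ (Fin d))), F h =
      ∫⁻ θ, (∫⁻ r in Ioi (0:ℝ), ENNReal.ofReal (r ^ (d-1)) *
        F (r • (θ : EuclideanSpace ℝ (Fin d))))
        ∂((volume : Measure (EuclideanSpace ℝ (Fin d))).toSphere) := by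
  have h1 := lintegral_subtype_comap (μ := (volume : Measure (EuclideanSpace ℝ (Fin d))))
    (measurableSet_singleton (0 : EuclideanSpace ℝ (Fin d))).compl F
  rw [← h1]
  have hmp := (volume : Measure (EuclideanSpace ℝ (Fin d))).measurePreserving_homeomorphUnitSphereProd
  have h2 := hmp.lintegral_comp_emb (Homeomorph.measurableEmbedding _)
    (fun p => F (((homeomorphUnitSphereProd (EuclideanSpace ℝ (Fin d))).symm p : _)))
  simp only [Homeomorph.symm_apply_apply] at h2
  rw [h2, lintegral_prod _ (by
    apply Measurable.aemeasurable
    exact hF.comp (measurable_subtype_coe.comp (Homeomorph.measurable _)))]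
  congr 1
  ext θ
  rw [Measure.volumeIoiPow, lintegral_withDensity_eq_lintegral_mul _ (by fun_prop) (by
    exact hF.comp (measurable_subtype_coe.comp ((Homeomorph.measurable _).comp measurable_prodMk_left)))]
  rw [← lintegral_subtype_comap measurableSet_Ioi]
  simp

lemma aux_Lfun (ℓ : ℝ → ℝ) (hℓmeas : Measurable ℓ)
    (hℓpos : ∀ s : ℝ, 0 < s → s < 1 → 0 < ℓ s) (R : ℝ) (hR : 5 ≤ R) :
    Lfun ℓ R⁻¹ = (∫⁻ s in Ioo R⁻¹ 1, ENNReal.ofReal (ℓ s / s)).toReal := by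
  have hR0 : 0 < R := by linarith
  have h1 : R⁻¹ ≤ 1 := inv_le_one_of_one_le₀ (by linarith)
  rw [Lfun, intervalIntegral.integral_of_le h1, integral_Ioc_eq_integral_Ioo,
    integral_eq_lintegral_of_nonneg_ae _ (Measurable.aestronglyMeasurable (by fun_prop))]
  filter_upwards [ae_restrict_mem measurableSet_Ioo] with s hs
  have hs0 : 0 < s := lt_trans (by positivity) hs.1
  exact div_nonneg (hℓpos s hs0 hs.2).le hs0.le

lemma aux_psi (d : ℕ) (k : EuclideanSpace ℝ (Fin d) → ℝ) (hk : Measurable k)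
    (hk0 : ∀ h, 0 ≤ k h) (ξ : EuclideanSpace ℝ (Fin d)) :
    psiFun d k ξ = (∫⁻ h in ({0}ᶜ : Set (EuclideanSpace ℝ (Fin d))),
      ENNReal.ofReal ((1 - Real.cos ⟪ξ, h⟫) * k h)).toReal := by
  rw [psiFun, integral_eq_lintegral_of_nonneg_ae _ (Measurable.aestronglyMeasurable (by fun_prop))]
  exact Eventually.of_forall fun h =>
    mul_nonneg (by linarith [Real.cos_le_one ⟪ξ, h⟫]) (hk0 h)

lemma aux_psi_fin (d : ℕ) (k : EuclideanSpace ℝ (Fin d) → ℝ) (K₀ : ℝ)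
    (hk : Measurable k) (hk0 : ∀ h, 0 ≤ k h)
    (hK : (∫⁻ h in ({0}ᶜ : Set (EuclideanSpace ℝ (Fin d))),
      ENNReal.ofReal (min 1 (‖h‖ ^ 2) * k h)) ≤ ENNReal.ofReal K₀)
    (ξ : EuclideanSpace ℝ (Fin d)) :
    (∫⁻ h in ({0}ᶜ : Set (EuclideanSpace ℝ (Fin d))),
      ENNReal.ofReal ((1 - Real.cos ⟪ξ, h⟫) * k h)) ≠ ∞ := by
  apply ne_of_lt
  calc _ ≤ ∫⁻ h in ({0}ᶜ : Set (EuclideanSpace ℝ (Fin d))),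
      ENNReal.ofReal (2 + ‖ξ‖^2) * ENNReal.ofReal (min 1 (‖h‖ ^ 2) * k h) := by
        apply lintegral_mono
        intro h
        simp only
        rw [← ENNReal.ofReal_mul (by positivity)]
        apply ENNReal.ofReal_le_ofReal
        rw [← mul_assoc]
        apply mul_le_mul_of_nonneg_right _ (hk0 h)
        have h1 := Real.neg_one_le_cos ⟪ξ, h⟫
        have h2 := Real.one_sub_sq_div_two_le_cos (x := ⟪ξ, h⟫)
        have h3 := abs_real_inner_le_norm ξ h
        have h4 : ⟪ξ, h⟫^2 ≤ ‖ξ‖^2 * ‖h‖^2 := by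
          rw [← sq_abs, ← mul_pow]
          exact pow_le_pow_left₀ (abs_nonneg _) h3 2
        have h5 := sq_nonneg ‖ξ‖
        have h6 := sq_nonneg ‖h‖
        rcases le_total 1 (‖h‖^2) with hh | hh
        · rw [min_eq_left hh]; linarith
        · rw [min_eq_right hh]; nlinarith
    _ = ENNReal.ofReal (2 + ‖ξ‖^2) * _ := by rw [lintegral_const_mul _ (by fun_prop)]
    _ ≤ ENNReal.ofReal (2 + ‖ξ‖^2) * ENNReal.ofReal K₀ := by gcongr
    _ < ∞ := ENNReal.mul_lt_top ENNReal.ofReal_lt_top ENNReal.ofReal_lt_top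

lemma aux_main (d : ℕ) (hd : 1 ≤ d) (κ : ℝ) (hκ : 1 < κ) (ℓ : ℝ → ℝ) (hℓmeas : Measurable ℓ)
    (C : ℝ≥0∞) (hC : C ≠ ∞)
    (H : ∀ R u : ℝ, 5 ≤ R → R / 3 ≤ |u| →
      ∫⁻ s in Ioo R⁻¹ 1, ENNReal.ofReal (ℓ s / s) ≤
      C * ∫⁻ s in Ioo (0:ℝ) 1, ENNReal.ofReal ((1 - Real.cos (s * u)) * (ℓ s / s)))
    (k : EuclideanSpace ℝ (Fin d) → ℝ) (hk : Measurable k)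
    (hlow : ∀ h : EuclideanSpace ℝ (Fin d), 0 < ‖h‖ → ‖h‖ ≤ 1 →
      κ⁻¹ * (ℓ ‖h‖ / ‖h‖ ^ d) ≤ k h)
    (ξ : EuclideanSpace ℝ (Fin d)) (hξ : 5 ≤ ‖ξ‖) :
    ENNReal.ofReal κ⁻¹ * (∫⁻ s in Ioo ‖ξ‖⁻¹ 1, ENNReal.ofReal (ℓ s / s)) *
      (Measure.toSphereBallBound d (1/2) * volume (ball (0 : EuclideanSpace ℝ (Fin d)) 1)) ≤
    C * (∫⁻ h in ({0}ᶜ : Set (EuclideanSpace ℝ (Fin d))),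
      ENNReal.ofReal ((1 - Real.cos ⟪ξ, h⟫) * k h)) := by
  have hκ0 : 0 < κ⁻¹ := by positivity
  have hξ0 : 0 < ‖ξ‖ := by linarith
  set X := ∫⁻ s in Ioo ‖ξ‖⁻¹ 1, ENNReal.ofReal (ℓ s / s)
  set e : sphere (0 : EuclideanSpace ℝ (Fin d)) 1 := ⟨‖ξ‖⁻¹ • ξ, by
    simp [norm_smul, hξ0.ne']⟩ with he
  have hball := Measure.toSphereBallBound_mul_measure_unitBall_le_toSphere_ball
    (volume : Measure (EuclideanSpace ℝ (Fin d))) (ε := 1/2) (by norm_num) e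
  rw [finrank_euclideanSpace_fin] at hball
  rw [aux_polar d _ (by fun_prop), ← lintegral_const_mul' _ _ hC]
  refine le_trans ?_ (setLIntegral_le_lintegral (ball e (1/2)) _)
  refine le_trans (mul_le_mul_right hball _) ?_
  rw [← setLIntegral_const]
  apply setLIntegral_mono' measurableSet_ball
  intro θ hθ
  have hθ1 : ‖(θ : EuclideanSpace ℝ (Fin d))‖ = 1 := by simp
  have hinner : ‖ξ‖ / 3 ≤ |⟪ξ, (θ : EuclideanSpace ℝ (Fin d))⟫| := by
    have h1 : ‖(θ : EuclideanSpace ℝ (Fin d)) - ‖ξ‖⁻¹ • ξ‖ < 1/2 := by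
      have := mem_ball.1 hθ
      rwa [Subtype.dist_eq, dist_eq_norm] at this
    have h2 : ⟪ξ, (θ : EuclideanSpace ℝ (Fin d))⟫ =
        ‖ξ‖ + ⟪ξ, (θ : EuclideanSpace ℝ (Fin d)) - ‖ξ‖⁻¹ • ξ⟫ := by
      rw [inner_sub_right, inner_smul_right, real_inner_self_eq_norm_sq]
      field_simp
      ring
    have h3 := (abs_le.1 (abs_real_inner_le_norm ξ
      ((θ : EuclideanSpace ℝ (Fin d)) - ‖ξ‖⁻¹ • ξ))).1
    refine le_trans ?_ (le_abs_self _)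
    rw [h2]
    nlinarith
  have h := H ‖ξ‖ _ hξ hinner
  set u := ⟪ξ, (θ : EuclideanSpace ℝ (Fin d))⟫ with hu
  calc ENNReal.ofReal κ⁻¹ * X
      ≤ ENNReal.ofReal κ⁻¹ * (C * ∫⁻ s in Ioo (0:ℝ) 1,
          ENNReal.ofReal ((1 - Real.cos (s * u)) * (ℓ s / s))) := by gcongr
    _ = C * ∫⁻ s in Ioo (0:ℝ) 1, ENNReal.ofReal κ⁻¹ *
          ENNReal.ofReal ((1 - Real.cos (s * u)) * (ℓ s / s)) := by
        rw [lintegral_const_mul _ (by fun_prop)]; ring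
    _ ≤ C * ∫⁻ r in Ioo (0:ℝ) 1, ENNReal.ofReal (r ^ (d-1)) *
          ENNReal.ofReal ((1 - Real.cos ⟪ξ, r • (θ : EuclideanSpace ℝ (Fin d))⟫) *
            k (r • (θ : EuclideanSpace ℝ (Fin d)))) := by
        gcongr 1
        apply setLIntegral_mono' measurableSet_Ioo
        intro r hr
        have hr0 : 0 < r := hr.1
        have hn : ‖r • (θ : EuclideanSpace ℝ (Fin d))‖ = r := by
          rw [norm_smul, hθ1, mul_one, Real.norm_of_nonneg hr0.le]
        have hl := hlow (r • (θ : EuclideanSpace ℝ (Fin d))) (by rw [hn]; exact hr0)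
          (by rw [hn]; exact hr.2.le)
        rw [hn] at hl
        rw [← ENNReal.ofReal_mul hκ0.le, ← ENNReal.ofReal_mul (by positivity)]
        apply ENNReal.ofReal_le_ofReal
        rw [inner_smul_right, ← hu]
        have hc : 0 ≤ 1 - Real.cos (r * u) := by linarith [Real.cos_le_one (r*u)]
        obtain ⟨n, rfl⟩ : ∃ n, d = n + 1 := ⟨d - 1, by omega⟩
        calc κ⁻¹ * ((1 - Real.cos (r * u)) * (ℓ r / r))
            = r ^ (n + 1 - 1) * ((1 - Real.cos (r * u)) * (κ⁻¹ * (ℓ r / r ^ (n+1)))) := by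
              simp only [Nat.add_sub_cancel]
              field_simp
              ring
          _ ≤ _ := by gcongr
    _ ≤ _ := by
        gcongr 1
        exact lintegral_mono_set fun s hs => hs.1

/-- There exists `c > 0`, depending only on `d, K₀, κ, α, ℓ`, such that
`ψ(ξ) ≥ c L(|ξ|⁻¹)` for all `ξ ∈ ℝ^d` with `|ξ| ≥ 5`. -/
theorem statement4 (d : ℕ) (hd : 1 ≤ d) (K₀ κ α : ℝ) (hK₀ : 0 < K₀) (hκ : 1 < κ)
    (hα₀ : 0 ≤ α) (hα₂ : α < 2) (ℓ : ℝ → ℝ) (hℓmeas : Measurable ℓ)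
    (hℓpos : ∀ s : ℝ, 0 < s → s < 1 → 0 < ℓ s)
    (hℓbdd : LocBddAway ℓ) (hℓreg : RegVaryAt0 ℓ (-α)) :
    ∃ c : ℝ, 0 < c ∧
      ∀ k : EuclideanSpace ℝ (Fin d) → ℝ, KernelCondsTI d K₀ κ ℓ k →
        ∀ ξ : EuclideanSpace ℝ (Fin d), 5 ≤ ‖ξ‖ →
          c * Lfun ℓ (‖ξ‖⁻¹) ≤ psiFun d k ξ := by
  by_cases hA : ∫⁻ s in Ioo (1/2:ℝ) 1, ENNReal.ofReal (ℓ s / s) = ∞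
  · refine ⟨1, one_pos, ?_⟩
    rintro k ⟨hk, hk0, -, -, -⟩ ξ hξ
    have htop : ∫⁻ s in Ioo ‖ξ‖⁻¹ 1, ENNReal.ofReal (ℓ s / s) = ∞ := by
      rw [eq_top_iff, ← hA]
      apply lintegral_mono_set
      apply Ioo_subset_Ioo_left
      rw [inv_le_comm₀ (by linarith) (by norm_num)]
      linarith
    rw [aux_Lfun ℓ hℓmeas hℓpos _ hξ, htop, aux_psi d k hk hk0]
    simp
  · obtain ⟨C, hC, H⟩ := aux_1d α hα₀ ℓ hℓmeas hℓpos hℓbdd hℓreg hA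
    set σ : ℝ≥0∞ := Measure.toSphereBallBound d (1/2) *
      volume (ball (0 : EuclideanSpace ℝ (Fin d)) 1) with hσ
    have hσtop : σ ≠ ∞ := ENNReal.mul_ne_top ENNReal.coe_ne_top measure_ball_lt_top.ne
    have hσ0 : σ ≠ 0 := mul_ne_zero
      (by simpa using (Measure.toSphereBallBound_pos d (1/2)).ne')
      (measure_ball_pos volume _ one_pos).ne'
    have hσpos : 0 < σ.toReal := ENNReal.toReal_pos hσ0 hσtop
    have hκ0 : 0 < κ⁻¹ := by positivity
    have hC0 : 0 ≤ C.toReal := ENNReal.toReal_nonneg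
    refine ⟨κ⁻¹ * σ.toReal / (C.toReal + 1), by positivity, ?_⟩
    rintro k ⟨hk, hk0, -, hK, hb⟩ ξ hξ
    have hm := aux_main d hd κ hκ ℓ hℓmeas C hC H k hk (fun h h0 h1 => (hb h h0 h1).1) ξ hξ
    have hfin := aux_psi_fin d k K₀ hk hk0 hK ξ
    rw [aux_Lfun ℓ hℓmeas hℓpos _ hξ, aux_psi d k hk hk0]
    rw [← hσ] at hm
    clear_value σ
    have hm' := ENNReal.toReal_mono (ENNReal.mul_ne_top hC hfin) hm
    rw [ENNReal.toReal_mul, ENNReal.toReal_mul, ENNReal.toReal_mul,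
      ENNReal.toReal_ofReal hκ0.le] at hm'
    set X := (∫⁻ s in Ioo ‖ξ‖⁻¹ 1, ENNReal.ofReal (ℓ s / s)).toReal
    set Y := (∫⁻ h in ({0}ᶜ : Set (EuclideanSpace ℝ (Fin d))),
      ENNReal.ofReal ((1 - Real.cos ⟪ξ, h⟫) * k h)).toReal
    have hY : 0 ≤ Y := ENNReal.toReal_nonneg
    rw [div_mul_eq_mul_div, div_le_iff₀ (by positivity)]
    nlinarith
end
end

section
/- There exists a constant c' > 0, depending only on c₄, such that for every real M ≥ 5, ∫_0^1 (1 − cos(M r)) F(r) dr ≥ c' ∫_{3π/(2M)}^1 F(r) dr. -/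
open MeasureTheory Set Filter Real

noncomputable section

/-- For every constant `c₄ ∈ (0,1]` there exists `c' > 0`, depending
only on `c₄`, such that whenever `F : (0,1) → (0,∞)` is Lebesgue integrable and satisfies
`F(r) ≥ c₄ F(s)` for all `0 < r ≤ s < 1`, one has, for every real `M ≥ 5`,
`∫_0^1 (1 - cos(M r)) F(r) dr ≥ c' ∫_{3π/(2M)}^1 F(r) dr`. -/
theorem statement11 (c₄ : ℝ) (hc₄₀ : 0 < c₄) (hc₄₁ : c₄ ≤ 1) :
    ∃ c' : ℝ, 0 < c' ∧
      ∀ F : ℝ → ℝ, IntegrableOn F (Set.Ioo (0:ℝ) 1) →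
        (∀ r : ℝ, 0 < r → r < 1 → 0 < F r) →
        (∀ r s : ℝ, 0 < r → r ≤ s → s < 1 → c₄ * F s ≤ F r) →
        ∀ M : ℝ, 5 ≤ M →
          c' * ∫ r in (3 * π / (2 * M))..1, F r
            ≤ ∫ r in (0:ℝ)..1, (1 - Real.cos (M * r)) * F r := by
  refine ⟨c₄, hc₄₀, ?_⟩
  intro F hF hpos hmon M hM
  have hM0 : 0 < M := by linarith
  set a : ℝ := 3 * π / (2 * M) with ha
  set d : ℝ := π / M with hd
  have hd0 : 0 < d := by positivity
  have had : a = 3 / 2 * d := by rw [ha, hd]; field_simp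
  have hMd : M * d = π := by rw [hd]; field_simp
  have ha1 : a < 1 := by
    rw [ha, div_lt_one (by positivity)]
    nlinarith [Real.pi_lt_d2]
  have hFi : IntervalIntegrable F volume 0 1 := by
    rw [intervalIntegrable_iff_integrableOn_Ioo_of_le zero_le_one]
    exact hF
  set G : ℝ → ℝ := fun r => (1 - Real.cos (M * r)) * F r with hG
  have hGi : IntervalIntegrable G volume 0 1 :=
    hFi.continuousOn_mul (by fun_prop)
  have hGnn : ∀ r : ℝ, 0 < r → r < 1 → 0 ≤ G r := fun r h0 h1 =>
    mul_nonneg (by linarith [Real.cos_le_one (M * r)]) (hpos r h0 h1).le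
  have hsub : ∀ x y : ℝ, 0 ≤ x → x ≤ y → y ≤ 1 → ∀ f : ℝ → ℝ,
      IntervalIntegrable f volume 0 1 → IntervalIntegrable f volume x y := by
    intro x y hx hxy hy f hf
    apply hf.mono_set
    rw [uIcc_of_le hxy, uIcc_of_le zero_le_one]
    exact Icc_subset_Icc hx hy
  have hle : ∀ x y : ℝ, 0 ≤ x → x ≤ y → y ≤ 1 → ∫ r in x..y, G r ≤ ∫ r in (0:ℝ)..1, G r := by
    intro x y hx hxy hy
    apply intervalIntegral.integral_mono_interval hx hxy hy _ hGi
    rw [← restrict_Ioo_eq_restrict_Ioc]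
    filter_upwards [ae_restrict_mem measurableSet_Ioo] with r hr
    exact hGnn r hr.1 hr.2
  have hGa : IntervalIntegrable G volume a 1 := hsub a 1 (by linarith) ha1.le le_rfl G hGi
  have hGs : IntervalIntegrable (fun r => G (r - d)) volume a 1 := by
    have h := (hsub (a - d) (1 - d) (by linarith) (by linarith) (by linarith) G hGi).comp_sub_right d
    simpa using h
  have hFa : IntervalIntegrable F volume a 1 := hsub a 1 (by linarith) ha1.le le_rfl F hFi
  have key : ∫ r in a..1, (2 * c₄) * F r ≤ ∫ r in a..1, (G r + G (r - d)) := by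
    apply intervalIntegral.integral_mono_on_of_le_Ioo ha1.le (hFa.const_mul _) (hGa.add hGs)
    intro r hr
    have hr1 := hr.1
    have hr2 := hr.2
    have hc : Real.cos (M * (r - d)) = - Real.cos (M * r) := by
      rw [mul_sub, hMd, Real.cos_sub_pi]
    simp only [hG, hc]
    have h1 := hmon (r - d) r (by linarith) (by linarith) hr2
    have h2 := hpos r (by linarith) hr2
    have h3 := Real.cos_le_one (M * r)
    have h4 := Real.neg_one_le_cos (M * r)
    have h5 := mul_le_mul_of_nonneg_left h1 (show 0 ≤ 1 + Real.cos (M * r) by linarith)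
    have h6 : c₄ * F r ≤ F r := by nlinarith
    have h7 := mul_le_mul_of_nonneg_left h6 (show 0 ≤ 1 - Real.cos (M * r) by linarith)
    linarith
  rw [intervalIntegral.integral_add hGa hGs, intervalIntegral.integral_const_mul,
    intervalIntegral.integral_comp_sub_right (fun r => G r) d] at key
  have e1 := hle a 1 (by linarith) ha1.le le_rfl
  have e2 := hle (a - d) (1 - d) (by linarith) (by linarith) (by linarith)
  linarith
end
end
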